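/- arXiv:0708.4173 — 2 statements merged into one kernel-verified Lean document; each statement's English description precedes it below -/
import Mathlib

section
/- Given a recollement (S, T, U) and a Serre functor F on T with quasi-inverse F', set i_! := F' ∘ i_* ∘ i^! ∘ F ∘ i_* : S → T and j^? := j^* ∘ F' ∘ j_* ∘ j^* ∘ F : T → U. Then the six functors j_! : U → T, j^?, j^* : T → U, i^* : T → S, i_!, i_* : S → T form a recollement (U, T, S); that is: (j^?, j_!), (j_!, j^*), (i_!, i^*), (i^*, i_*) are adjoint pairs, i^* ∘ j_! = 0, the functors j_!, i_!, i_* are fully faithful, and every object X of T sits in distinguished triangles j_! j^* X → X → i_* i^* X → and i_! i^* X → X → j_! j^? X →, with the morphisms into and out of X being the relevant counit and unit morphisms. -/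
/-!
Setting: `k` a field; `S`, `T`, `U` skeletally small `k`-linear triangulated categories
with finite-dimensional Hom-spaces, `T` with split idempotents.  A recollement
`(S, T, U)` as in [BBD], and (right/left) Serre functors in the sense of
Reiten–Van den Bergh.
-/

open CategoryTheory CategoryTheory.Limits CategoryTheory.Pretriangulated

universe v₁ v₂ v₃ u₁ u₂ u₃ u₄

/-- A right Serre structure on an endofunctor `F` of a `k`-linear category `C`:
isomorphisms `C(X, Y) ≅ C(Y, F X)^∨`, natural in `X` and `Y`.
A right Serre functor is a functor `F` equipped with such a structure. -/
structure RightSerreStructure (k : Type u₄) [Field k] (C : Type u₁) [Category.{v₁} C]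
    [Preadditive C] [CategoryTheory.Linear k C] (F : C ⥤ C) where
  equiv : ∀ X Y : C, (X ⟶ Y) ≃ₗ[k] Module.Dual k (Y ⟶ F.obj X)
  naturality_left : ∀ {X X' Y : C} (f : X' ⟶ X) (φ : X ⟶ Y) (u : Y ⟶ F.obj X'),
    equiv X' Y (f ≫ φ) u = equiv X Y φ (u ≫ F.map f)
  naturality_right : ∀ {X Y Y' : C} (φ : X ⟶ Y) (g : Y ⟶ Y') (u : Y' ⟶ F.obj X),
    equiv X Y' (φ ≫ g) u = equiv X Y φ (g ≫ u)

/-- A left Serre structure on an endofunctor `F'` of a `k`-linear category `C`: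
isomorphisms `C(X, Y) ≅ C(F' Y, X)^∨`, natural in `X` and `Y`.
A left Serre functor is a functor `F'` equipped with such a structure. -/
structure LeftSerreStructure (k : Type u₄) [Field k] (C : Type u₁) [Category.{v₁} C]
    [Preadditive C] [CategoryTheory.Linear k C] (F' : C ⥤ C) where
  equiv : ∀ X Y : C, (X ⟶ Y) ≃ₗ[k] Module.Dual k (F'.obj Y ⟶ X)
  naturality_left : ∀ {X X' Y : C} (f : X' ⟶ X) (φ : X ⟶ Y) (u : F'.obj Y ⟶ X'),
    equiv X' Y (f ≫ φ) u = equiv X Y φ (u ≫ f)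
  naturality_right : ∀ {X Y Y' : C} (φ : X ⟶ Y) (g : Y ⟶ Y') (u : F'.obj Y' ⟶ X),
    equiv X Y' (φ ≫ g) u = equiv X Y φ (F'.map g ≫ u)

/-- A Serre functor: an essentially surjective right Serre functor. -/
structure SerreFunctor (k : Type u₄) [Field k] (C : Type u₁) [Category.{v₁} C]
    [Preadditive C] [CategoryTheory.Linear k C] where
  F : C ⥤ C
  rightSerre : RightSerreStructure k C F
  essSurj : F.EssSurj

/-- A recollement of triangulated categories `(S, T, U)`:
triangulated functors `i_* = iSt : S ⥤ T`, `i^* = iUp, i^! = iSh : T ⥤ S`,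
`j^* = jUp : T ⥤ U`, `j_! = jLo, j_* = jSt : U ⥤ T` with the adjunctions,
vanishing, full faithfulness and distinguished-triangle conditions of [BBD, sec. 1.4]. -/
structure Recollement (S : Type u₁) (T : Type u₂) (U : Type u₃)
    [Category.{v₁} S] [Category.{v₂} T] [Category.{v₃} U]
    [HasZeroObject S] [HasZeroObject T] [HasZeroObject U]
    [Preadditive S] [Preadditive T] [Preadditive U]
    [HasShift S ℤ] [HasShift T ℤ] [HasShift U ℤ]
    [∀ n : ℤ, (shiftFunctor S n).Additive] [∀ n : ℤ, (shiftFunctor T n).Additive]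
    [∀ n : ℤ, (shiftFunctor U n).Additive]
    [Pretriangulated S] [Pretriangulated T] [Pretriangulated U] where
  /-- `i_* : S ⥤ T` -/
  iSt : S ⥤ T
  /-- `i^* : T ⥤ S` -/
  iUp : T ⥤ S
  /-- `i^! : T ⥤ S` -/
  iSh : T ⥤ S
  /-- `j^* : T ⥤ U` -/
  jUp : T ⥤ U
  /-- `j_! : U ⥤ T` -/
  jLo : U ⥤ T
  /-- `j_* : U ⥤ T` -/
  jSt : U ⥤ T
  [commShift_iSt : iSt.CommShift ℤ]
  [commShift_iUp : iUp.CommShift ℤ]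
  [commShift_iSh : iSh.CommShift ℤ]
  [commShift_jUp : jUp.CommShift ℤ]
  [commShift_jLo : jLo.CommShift ℤ]
  [commShift_jSt : jSt.CommShift ℤ]
  [isTriangulated_iSt : iSt.IsTriangulated]
  [isTriangulated_iUp : iUp.IsTriangulated]
  [isTriangulated_iSh : iSh.IsTriangulated]
  [isTriangulated_jUp : jUp.IsTriangulated]
  [isTriangulated_jLo : jLo.IsTriangulated]
  [isTriangulated_jSt : jSt.IsTriangulated]
  /-- `(i^*, i_*)` is an adjoint pair. -/
  adj₁ : iUp ⊣ iSt
  /-- `(i_*, i^!)` is an adjoint pair. -/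
  adj₂ : iSt ⊣ iSh
  /-- `(j_!, j^*)` is an adjoint pair. -/
  adj₃ : jLo ⊣ jUp
  /-- `(j^*, j_*)` is an adjoint pair. -/
  adj₄ : jUp ⊣ jSt
  /-- `j^* ∘ i_* = 0`. -/
  zero_comp : ∀ X : S, IsZero (jUp.obj (iSt.obj X))
  fullyFaithful_iSt : iSt.FullyFaithful
  fullyFaithful_jLo : jLo.FullyFaithful
  fullyFaithful_jSt : jSt.FullyFaithful
  /-- The distinguished triangle `i_* i^! X ⟶ X ⟶ j_* j^* X ⟶`, whose morphisms into and
  out of `X` are the counit of `(i_*, i^!)` and the unit of `(j^*, j_*)`. -/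
  triangle_a : ∀ X : T, ∃ δ : jSt.obj (jUp.obj X) ⟶ (iSt.obj (iSh.obj X))⟦(1 : ℤ)⟧,
    Triangle.mk (adj₂.counit.app X) (adj₄.unit.app X) δ ∈ distTriang T
  /-- The distinguished triangle `j_! j^* X ⟶ X ⟶ i_* i^* X ⟶`, whose morphisms into and
  out of `X` are the counit of `(j_!, j^*)` and the unit of `(i^*, i_*)`. -/
  triangle_b : ∀ X : T, ∃ δ : iSt.obj (iUp.obj X) ⟶ (jLo.obj (jUp.obj X))⟦(1 : ℤ)⟧,
    Triangle.mk (adj₃.counit.app X) (adj₁.unit.app X) δ ∈ distTriang T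

namespace ReflectedRecollement

section General

variable {C : Type u₁} {D : Type u₂} [Category.{v₁} C] [Category.{v₂} D]

/-- Postcomposition with `c : X ⟶ X'` is bijective on maps out of `L Y` if `R c` is iso. -/
lemma bijective_postcomp {L : C ⥤ D} {R : D ⥤ C} (adj : L ⊣ R) {X X' : D} (c : X ⟶ X')
    (hc : IsIso (R.map c)) (Y : C) :
    Function.Bijective (fun f : L.obj Y ⟶ X => f ≫ c) := by
  constructor
  · intro f g h
    apply (adj.homEquiv _ _).injective
    have h' := congrArg (adj.homEquiv _ _) h
    simp only [adj.homEquiv_naturality_right] at h'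
    exact (cancel_mono _).1 h'
  · intro g
    refine ⟨(adj.homEquiv _ _).symm (adj.homEquiv _ _ g ≫ inv (R.map c)), ?_⟩
    apply (adj.homEquiv _ _).injective
    simp [adj.homEquiv_naturality_right]

/-- Precomposition with `c : X ⟶ X'` is bijective on maps into `R Z` if `L c` is iso. -/
lemma bijective_precomp {L : C ⥤ D} {R : D ⥤ C} (adj : L ⊣ R) {X X' : C} (c : X ⟶ X')
    (hc : IsIso (L.map c)) (Z : D) :
    Function.Bijective (fun f : X' ⟶ R.obj Z => c ≫ f) := by
  constructor
  · intro f g h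
    apply (adj.homEquiv _ _).symm.injective
    have h' := congrArg (adj.homEquiv _ _).symm h
    simp only [adj.homEquiv_naturality_left_symm] at h'
    exact (cancel_epi _).1 h'
  · intro g
    refine ⟨adj.homEquiv _ _ (inv (L.map c) ≫ (adj.homEquiv _ _).symm g), ?_⟩
    apply (adj.homEquiv _ _).symm.injective
    simp [adj.homEquiv_naturality_left_symm]

end General

section Serre

variable {k : Type u₄} [Field k] {T : Type u₂} [Category.{v₂} T] [Preadditive T]
  [CategoryTheory.Linear k T] {F : T ⥤ T}

/-- Precomposition as a linear equivalence. -/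
noncomputable def preEquiv (k : Type u₄) [Field k] [CategoryTheory.Linear k T]
    {X X' Z : T} (c : X ⟶ X')
    (h : Function.Bijective (fun f : X' ⟶ Z => c ≫ f)) : (X' ⟶ Z) ≃ₗ[k] (X ⟶ Z) :=
  LinearEquiv.ofBijective (Linear.leftComp k Z c) h

/-- Postcomposition as a linear equivalence. -/
noncomputable def postEquiv (k : Type u₄) [Field k] [CategoryTheory.Linear k T]
    {X X' Y : T} (c : X ⟶ X')
    (h : Function.Bijective (fun f : Y ⟶ X => f ≫ c)) : (Y ⟶ X) ≃ₗ[k] (Y ⟶ X') :=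
  LinearEquiv.ofBijective (Linear.rightComp k Y c) h

/-- The core Hom-bijection obtained from Serre duality. -/
noncomputable def core (E : RightSerreStructure k T F) {F' : T ⥤ T} (ε : F' ⋙ F ≅ 𝟭 T)
    {W M N B : T} (e : (M ⟶ W) ≃ₗ[k] (B ⟶ F.obj N)) : (F'.obj W ⟶ M) ≃ (N ⟶ B) :=
  ((E.equiv (F'.obj W) M).trans
    ((postEquiv k (Y := M) (ε.inv.app W)
      ⟨fun f g h => (cancel_mono (ε.inv.app W)).1 h,
        fun g => ⟨g ≫ ε.hom.app W, by simp⟩⟩).dualMap.trans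
      (e.symm.dualMap.trans (E.equiv N B).symm))).toEquiv

lemma core_iff (E : RightSerreStructure k T F) {F' : T ⥤ T} (ε : F' ⋙ F ≅ 𝟭 T)
    {W M N B : T} (e : (M ⟶ W) ≃ₗ[k] (B ⟶ F.obj N)) (f : F'.obj W ⟶ M) (g : N ⟶ B) :
    core E ε e f = g ↔
      ∀ a : M ⟶ W, E.equiv _ _ f (a ≫ ε.inv.app W) = E.equiv _ _ g (e a) := by
  rw [← (E.equiv N B).injective.eq_iff]
  have key : E.equiv N B (core E ε e f) = e.symm.dualMap ((postEquiv k (Y := M) (ε.inv.app W)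
      ⟨fun f g h => (cancel_mono (ε.inv.app W)).1 h,
        fun g => ⟨g ≫ ε.hom.app W, by simp⟩⟩).dualMap (E.equiv _ _ f)) := by
    simp [core]
  rw [key]
  constructor
  · intro h a
    rw [← h]
    simp [postEquiv, LinearEquiv.dualMap_apply]
    rfl
  · intro h
    ext b
    have := h (e.symm b)
    rw [e.apply_symm_apply] at this
    rw [← this]
    simp [postEquiv, LinearEquiv.dualMap_apply]
    rfl

end Serre

section Rec

variable {S : Type u₁} {T : Type u₂} {U : Type u₃}
    [Category.{v₁} S] [Category.{v₂} T] [Category.{v₃} U]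
    [HasZeroObject S] [HasZeroObject T] [HasZeroObject U]
    [Preadditive S] [Preadditive T] [Preadditive U]
    [HasShift S ℤ] [HasShift T ℤ] [HasShift U ℤ]
    [∀ n : ℤ, (shiftFunctor S n).Additive] [∀ n : ℤ, (shiftFunctor T n).Additive]
    [∀ n : ℤ, (shiftFunctor U n).Additive]
    [Pretriangulated S] [Pretriangulated T] [Pretriangulated U]
    (R : Recollement S T U)

lemma isZero_iUp_jLo (X : U) : IsZero (R.iUp.obj (R.jLo.obj X)) := by
  rw [IsZero.iff_id_eq_zero]
  apply (R.adj₁.homEquiv _ _).injective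
  apply (R.adj₃.homEquiv _ _).injective
  exact (R.zero_comp _).eq_of_tgt _ _

lemma isIso_iUp_unit (X : T) : IsIso (R.iUp.map (R.adj₁.unit.app X)) := by
  have := R.fullyFaithful_iSt.full
  have := R.fullyFaithful_iSt.faithful
  infer_instance

lemma isIso_iSh_counit (X : T) : IsIso (R.iSh.map (R.adj₂.counit.app X)) := by
  have := R.fullyFaithful_iSt.full
  have := R.fullyFaithful_iSt.faithful
  infer_instance

lemma isIso_jUp_unit (X : T) : IsIso (R.jUp.map (R.adj₄.unit.app X)) := by
  have := R.fullyFaithful_jSt.full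
  have := R.fullyFaithful_jSt.faithful
  infer_instance

lemma isIso_jUp_counit (X : T) : IsIso (R.jUp.map (R.adj₃.counit.app X)) := by
  have := R.fullyFaithful_jLo.full
  have := R.fullyFaithful_jLo.faithful
  infer_instance

lemma isIso_counit₄ : IsIso R.adj₄.counit := by
  have := R.fullyFaithful_jSt.full
  have := R.fullyFaithful_jSt.faithful
  infer_instance

/-- The canonical transformation `j_! ⟶ j_*`. -/
noncomputable def theta : R.jLo ⟶ R.jSt :=
  haveI := isIso_counit₄ R
  { app := fun Y => R.jLo.map ((inv R.adj₄.counit).app Y) ≫ R.adj₃.counit.app (R.jSt.obj Y)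
    naturality := fun Y Y' f => by
      have h := (inv R.adj₄.counit).naturality f
      have h' := R.adj₃.counit.naturality (R.jSt.map f)
      dsimp at h h'
      rw [← R.jLo.map_comp_assoc, h, R.jLo.map_comp_assoc, h', Category.assoc] }

lemma isIso_jUp_theta (Y : U) : IsIso (R.jUp.map ((theta R).app Y)) := by
  have := isIso_counit₄ R
  have := isIso_jUp_counit R (R.jSt.obj Y)
  dsimp [theta]
  rw [Functor.map_comp]
  infer_instance

variable {k : Type u₄} [Field k] [CategoryTheory.Linear k T]

/-- `Hom(j_* Y, j_* j^* X) ≃ Hom(j_! Y, X)`. -/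
noncomputable def eA (k : Type u₄) [Field k] [CategoryTheory.Linear k T] (X : T) (Y : U) :
    (R.jSt.obj Y ⟶ R.jSt.obj (R.jUp.obj X)) ≃ₗ[k] (R.jLo.obj Y ⟶ X) :=
  (preEquiv k ((theta R).app Y) (bijective_precomp R.adj₄ _ (isIso_jUp_theta R Y) _)).trans
    (postEquiv k (R.adj₄.unit.app X) (bijective_postcomp R.adj₃ _ (isIso_jUp_unit R X) Y)).symm

lemma eA_iff (X : T) (Y : U) (a : R.jSt.obj Y ⟶ R.jSt.obj (R.jUp.obj X)) (b : R.jLo.obj Y ⟶ X) :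
    eA R k X Y a = b ↔ (theta R).app Y ≫ a = b ≫ R.adj₄.unit.app X := by
  rw [eA, LinearEquiv.trans_apply, LinearEquiv.symm_apply_eq]
  rfl

lemma eA_spec (X : T) (Y : U) (a : R.jSt.obj Y ⟶ R.jSt.obj (R.jUp.obj X)) :
    (theta R).app Y ≫ a = eA R k X Y a ≫ R.adj₄.unit.app X :=
  (eA_iff R X Y a _).1 rfl

/-- `Hom(X, i_* i^! W) ≃ Hom(i_* i^* X, W)`. -/
noncomputable def eB (k : Type u₄) [Field k] [CategoryTheory.Linear k T] (X W : T) :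
    (X ⟶ R.iSt.obj (R.iSh.obj W)) ≃ₗ[k] (R.iSt.obj (R.iUp.obj X) ⟶ W) :=
  (preEquiv k (R.adj₁.unit.app X)
    (bijective_precomp R.adj₁ _ (isIso_iUp_unit R X) _)).symm.trans
    (postEquiv k (R.adj₂.counit.app W) (bijective_postcomp R.adj₂ _ (isIso_iSh_counit R W) _))

lemma eB_apply (X W : T) (w : R.iSt.obj (R.iUp.obj X) ⟶ R.iSt.obj (R.iSh.obj W)) :
    eB R k X W (R.adj₁.unit.app X ≫ w) = w ≫ R.adj₂.counit.app W := by
  have : (preEquiv k (R.adj₁.unit.app X)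
    (bijective_precomp R.adj₁ _ (isIso_iUp_unit R X) _)).symm (R.adj₁.unit.app X ≫ w) = w := by
    rw [LinearEquiv.symm_apply_eq]
    rfl
  rw [eB, LinearEquiv.trans_apply, this]
  rfl

lemma exists_eB (X : T) (V : S) (a : X ⟶ R.iSt.obj V) :
    ∃ w : R.iSt.obj (R.iUp.obj X) ⟶ R.iSt.obj V, a = R.adj₁.unit.app X ≫ w := by
  obtain ⟨w, hw⟩ := (bijective_precomp R.adj₁ _ (isIso_iUp_unit R X) V).2 a
  exact ⟨w, hw.symm⟩

/-- The adjunction `(j^?, j_!)`. -/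
noncomputable def adjA (SF : SerreFunctor k T) (F' : T ⥤ T) (ε : F' ⋙ SF.F ≅ 𝟭 T) :
    (SF.F ⋙ R.jUp ⋙ R.jSt ⋙ F' ⋙ R.jUp) ⊣ R.jLo :=
  Adjunction.mkOfHomEquiv
    { homEquiv := fun X Y => (R.adj₄.homEquiv _ _).trans
        (core SF.rightSerre ε (eA R k (SF.F.obj X) Y))
      homEquiv_naturality_left_symm := fun {X' X Y} x g => by
        rw [Equiv.symm_apply_eq]
        obtain ⟨f, rfl⟩ := ((R.adj₄.homEquiv _ _).trans
          (core SF.rightSerre ε (eA R k (SF.F.obj X) Y))).surjective g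
        rw [Equiv.symm_apply_apply]
        symm
        simp only [Equiv.trans_apply]
        generalize hg : core SF.rightSerre ε (eA R k (SF.F.obj X) Y) _ = g
        rw [core_iff] at hg ⊢
        intro a
        have h1 : eA R k (SF.F.obj X) Y (a ≫ R.jSt.map (R.jUp.map (SF.F.map x))) =
            eA R k (SF.F.obj X') Y a ≫ SF.F.map x := by
          rw [eA_iff, ← Category.assoc, eA_spec (k := k)]
          have := R.adj₄.unit.naturality (SF.F.map x)
          dsimp at this
          rw [Category.assoc, Category.assoc, this]
        have h2 := hg (a ≫ R.jSt.map (R.jUp.map (SF.F.map x)))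
        rw [h1] at h2
        rw [SF.rightSerre.naturality_left, ← h2]
        have h3 := ε.inv.naturality (R.jSt.map (R.jUp.map (SF.F.map x)))
        dsimp at h3
        dsimp
        rw [R.adj₄.homEquiv_naturality_left, SF.rightSerre.naturality_left]
        simp [h3]
      homEquiv_naturality_right := fun {X Y Y'} f y => by
        simp only [Equiv.trans_apply]
        generalize hg : core SF.rightSerre ε (eA R k (SF.F.obj X) Y) _ = g
        rw [core_iff] at hg ⊢
        intro a
        rw [R.adj₄.homEquiv_naturality_right, SF.rightSerre.naturality_right,
          SF.rightSerre.naturality_right, ← Category.assoc, hg]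
        congr 1
        rw [eA_iff]
        have := (theta R).naturality y
        rw [← Category.assoc, ← this, Category.assoc, eA_spec (k := k), Category.assoc] }

/-- The adjunction `(i_!, i^*)`. -/
noncomputable def adjB (SF : SerreFunctor k T) (F' : T ⥤ T) (ε : F' ⋙ SF.F ≅ 𝟭 T) :
    (R.iSt ⋙ SF.F ⋙ R.iSh ⋙ R.iSt ⋙ F') ⊣ R.iUp :=
  Adjunction.mkOfHomEquiv
    { homEquiv := fun Z X => (core SF.rightSerre ε (eB R k X (SF.F.obj (R.iSt.obj Z)))).trans
        R.fullyFaithful_iSt.homEquiv.symm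
      homEquiv_naturality_left_symm := fun {Z' Z X} z g => by
        rw [Equiv.symm_apply_eq]
        obtain ⟨f, rfl⟩ := ((core SF.rightSerre ε (eB R k X (SF.F.obj (R.iSt.obj Z)))).trans
          R.fullyFaithful_iSt.homEquiv.symm).surjective g
        rw [Equiv.symm_apply_apply]
        symm
        simp only [Equiv.trans_apply]
        rw [Equiv.symm_apply_eq]
        generalize hg : core SF.rightSerre ε (eB R k X (SF.F.obj (R.iSt.obj Z))) f = g
        have h0 : R.fullyFaithful_iSt.homEquiv (z ≫ R.fullyFaithful_iSt.homEquiv.symm g) =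
            R.iSt.map z ≫ g := by
          simp [Functor.FullyFaithful.homEquiv]
        rw [h0]
        rw [core_iff] at hg ⊢
        intro a
        obtain ⟨w, rfl⟩ := exists_eB R X _ a
        rw [eB_apply, SF.rightSerre.naturality_left (R.iSt.map z) g]
        have h2 := hg (R.adj₁.unit.app X ≫ w ≫ R.iSt.map (R.iSh.map (SF.F.map (R.iSt.map z))))
        rw [eB_apply] at h2
        have h3 := ε.inv.naturality (R.iSt.map (R.iSh.map (SF.F.map (R.iSt.map z))))
        have h4 := R.adj₂.counit.naturality (SF.F.map (R.iSt.map z))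
        dsimp at h3 h4
        rw [Category.assoc w, h4] at h2
        rw [Category.assoc w, ← h2]
        dsimp
        rw [SF.rightSerre.naturality_left]
        simp [h3]
      homEquiv_naturality_right := fun {Z X X'} f x => by
        simp only [Equiv.trans_apply]
        rw [Equiv.symm_apply_eq]
        generalize hg : core SF.rightSerre ε (eB R k X (SF.F.obj (R.iSt.obj Z))) f = g
        have h0 : R.fullyFaithful_iSt.homEquiv
            (R.fullyFaithful_iSt.homEquiv.symm g ≫ R.iUp.map x) =
            g ≫ R.iSt.map (R.iUp.map x) := by
          simp [Functor.FullyFaithful.homEquiv]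
        rw [h0]
        rw [core_iff] at hg ⊢
        intro a
        obtain ⟨w, rfl⟩ := exists_eB R X' _ a
        rw [SF.rightSerre.naturality_right, SF.rightSerre.naturality_right, eB_apply,
          ← Category.assoc, hg]
        congr 1
        have h4 := R.adj₁.unit.naturality x
        dsimp at h4
        rw [← Category.assoc, h4, Category.assoc, eB_apply, Category.assoc] }

/-- A criterion for a pair of maps to be completed to a distinguished triangle. -/
lemma exists_dist_of_retract {I X J C : T} (c : I ⟶ X) (u : X ⟶ J) (hcu : c ≫ u = 0)
    (g : X ⟶ C) (d : C ⟶ I⟦(1 : ℤ)⟧) (hT : Triangle.mk c g d ∈ distTriang T)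
    (h' : J ⟶ C) (hh' : u ≫ h' = g) (hq : ∀ q : J ⟶ J, u ≫ q = u → q = 𝟙 J)
    (hz : ∀ z : I⟦(1 : ℤ)⟧ ⟶ C, z = 0) :
    ∃ δ : J ⟶ I⟦(1 : ℤ)⟧, Triangle.mk c u δ ∈ distTriang T := by
  obtain ⟨h, hh⟩ : ∃ h : C ⟶ J, u = g ≫ h := Triangle.yoneda_exact₂ _ hT u hcu
  have e1 : h' ≫ h = 𝟙 _ := by
    apply hq
    rw [← Category.assoc, hh', ← hh]
  have e2 : h ≫ h' = 𝟙 _ := by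
    rw [← sub_eq_zero]
    obtain ⟨z, hz'⟩ : ∃ z : I⟦(1 : ℤ)⟧ ⟶ C, h ≫ h' - 𝟙 _ = d ≫ z :=
      Triangle.yoneda_exact₃ _ hT (h ≫ h' - 𝟙 C) (by
        change g ≫ (h ≫ h' - 𝟙 C) = 0
        rw [Preadditive.comp_sub, ← Category.assoc, ← hh, hh']
        simp)
    rw [hz', hz z, comp_zero]
  refine ⟨h' ≫ d, isomorphic_distinguished _ hT _ ?_⟩
  refine Triangle.isoMk _ _ (Iso.refl I) (Iso.refl X) ⟨h', h, e1, e2⟩ ?_ ?_ ?_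
  · change c ≫ 𝟙 X = 𝟙 I ≫ c
    simp
  · change u ≫ h' = 𝟙 X ≫ g
    simp [hh']
  · change (h' ≫ d) ≫ (𝟙 I)⟦(1 : ℤ)⟧' = h' ≫ d
    simp

/-- The second distinguished triangle. -/
lemma exists_triangle {jQ : T ⥤ U} {iL : S ⥤ T} (aA : jQ ⊣ R.jLo) (aB : iL ⊣ R.iUp) (X : T) :
    ∃ δ : R.jLo.obj (jQ.obj X) ⟶ (iL.obj (R.iUp.obj X))⟦(1 : ℤ)⟧,
      Triangle.mk (aB.counit.app X) (aA.unit.app X) δ ∈ distTriang T := by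
  letI := R.commShift_iUp
  haveI := R.isTriangulated_iUp
  have ffL : iL.FullyFaithful :=
    (Adjunction.Triple.mk aB R.adj₁).fullyFaithfulEquiv.symm R.fullyFaithful_iSt
  have := ffL.full
  have := ffL.faithful
  obtain ⟨C, g, d, hT⟩ := distinguished_cocone_triangle (aB.counit.app X)
  -- `i^* C = 0`
  have hC : IsZero (R.iUp.obj C) := by
    have h1 := R.iUp.map_distinguished _ hT
    refine Triangle.isZero₃_of_isIso₁ _ h1 ?_
    change IsIso (R.iUp.map (aB.counit.app X))
    infer_instance
  -- hence `C ≅ j_! j^* C`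
  obtain ⟨δ', hδ'⟩ := R.triangle_b C
  have hiso : IsIso (R.adj₃.counit.app C) := by
    refine (Triangle.isZero₃_iff_isIso₁ _ hδ').1 ?_
    letI := R.commShift_iSt
    haveI := R.isTriangulated_iSt
    exact R.iSt.map_isZero hC
  -- maps from `(i_! A)[1]` to `C` vanish
  have hz : ∀ (z : (iL.obj (R.iUp.obj X))⟦(1 : ℤ)⟧ ⟶ C), z = 0 := by
    intro z
    apply (shiftFunctor T (-1 : ℤ)).map_injective
    rw [← cancel_epi ((shiftFunctorCompIsoId T (1 : ℤ) (-1) (by simp)).inv.app _)]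
    apply (aB.homEquiv _ _).injective
    refine IsZero.eq_of_tgt ?_ _ _
    exact IsZero.of_iso ((shiftFunctor S (-1 : ℤ)).map_isZero hC)
      ((R.iUp.commShiftIso (-1 : ℤ)).app C)
  have hz0 : aB.counit.app X ≫ aA.unit.app X = 0 := by
    apply (aB.homEquiv _ _).injective
    exact (isZero_iUp_jLo R _).eq_of_tgt _ _
  refine exists_dist_of_retract (aB.counit.app X) (aA.unit.app X) hz0 g d hT
    (R.jLo.map ((aA.homEquiv _ _).symm (g ≫ inv (R.adj₃.counit.app C))) ≫
      R.adj₃.counit.app C) ?_ ?_ hz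
  · have h1 := aA.homEquiv_unit (X := X) (Y := R.jUp.obj C)
      (f := (aA.homEquiv _ _).symm (g ≫ inv (R.adj₃.counit.app C)))
    rw [Equiv.apply_symm_apply] at h1
    refine (Category.assoc _ _ _).symm.trans ?_
    refine (congrArg (fun t => t ≫ R.adj₃.counit.app C) h1.symm).trans ?_
    refine (Category.assoc _ _ _).trans ?_
    rw [IsIso.inv_hom_id]
    exact Category.comp_id g
  · intro q hq
    have := R.fullyFaithful_jLo.full
    obtain ⟨p, rfl⟩ := R.jLo.map_surjective q
    have hp : p = 𝟙 _ := by
      apply (aA.homEquiv _ _).injective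
      rw [aA.homEquiv_unit, aA.homEquiv_unit]
      exact hq.trans (by rw [R.jLo.map_id]; exact (Category.comp_id _).symm)
    rw [hp]
    exact R.jLo.map_id _

end Rec

end ReflectedRecollement

/-- Given a recollement `(S, T, U)` and a Serre functor `F` on `T` with quasi-inverse `F'`,
set `i_! := F' ∘ i_* ∘ i^! ∘ F ∘ i_* : S ⥤ T` and `j^? := j^* ∘ F' ∘ j_* ∘ j^* ∘ F : T ⥤ U`.
Then the six functors `j_! : U ⥤ T`, `j^?, j^* : T ⥤ U`, `i^* : T ⥤ S`, `i_!, i_* : S ⥤ T`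
form a recollement `(U, T, S)`:  `(j^?, j_!)`, `(j_!, j^*)`, `(i_!, i^*)`, `(i^*, i_*)` are
adjoint pairs, `i^* ∘ j_! = 0`, the functors `j_!`, `i_!`, `i_*` are fully faithful, and
every `X : T` sits in distinguished triangles `j_! j^* X ⟶ X ⟶ i_* i^* X ⟶` and
`i_! i^* X ⟶ X ⟶ j_! j^? X ⟶` whose morphisms into and out of `X` are the relevant
counit and unit morphisms. -/
theorem reflected_recollement_upper
    {k : Type u₄} [Field k]
    {S : Type u₁} {T : Type u₂} {U : Type u₃}
    [Category.{v₁} S] [Category.{v₂} T] [Category.{v₃} U]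
    [HasZeroObject S] [HasZeroObject T] [HasZeroObject U]
    [Preadditive S] [Preadditive T] [Preadditive U]
    [CategoryTheory.Linear k S] [CategoryTheory.Linear k T] [CategoryTheory.Linear k U]
    [HasShift S ℤ] [HasShift T ℤ] [HasShift U ℤ]
    [∀ n : ℤ, (shiftFunctor S n).Additive] [∀ n : ℤ, (shiftFunctor T n).Additive]
    [∀ n : ℤ, (shiftFunctor U n).Additive]
    [Pretriangulated S] [Pretriangulated T] [Pretriangulated U]
    [EssentiallySmall.{v₁} S] [EssentiallySmall.{v₂} T] [EssentiallySmall.{v₃} U]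
    [∀ X Y : S, FiniteDimensional k (X ⟶ Y)]
    [∀ X Y : T, FiniteDimensional k (X ⟶ Y)]
    [∀ X Y : U, FiniteDimensional k (X ⟶ Y)]
    [IsIdempotentComplete T]
    (R : Recollement S T U)
    (SF : SerreFunctor k T) (F' : T ⥤ T)
    (η : SF.F ⋙ F' ≅ 𝟭 T) (ε : F' ⋙ SF.F ≅ 𝟭 T) :
    ∃ (adjA : (SF.F ⋙ R.jUp ⋙ R.jSt ⋙ F' ⋙ R.jUp) ⊣ R.jLo)
      (adjB : (R.iSt ⋙ SF.F ⋙ R.iSh ⋙ R.iSt ⋙ F') ⊣ R.iUp),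
      (∀ X : U, IsZero (R.iUp.obj (R.jLo.obj X))) ∧
      Nonempty R.jLo.FullyFaithful ∧
      Nonempty (R.iSt ⋙ SF.F ⋙ R.iSh ⋙ R.iSt ⋙ F').FullyFaithful ∧
      Nonempty R.iSt.FullyFaithful ∧
      (∀ X : T, ∃ δ : R.iSt.obj (R.iUp.obj X) ⟶ (R.jLo.obj (R.jUp.obj X))⟦(1 : ℤ)⟧,
        Triangle.mk (R.adj₃.counit.app X) (R.adj₁.unit.app X) δ ∈ distTriang T) ∧
      (∀ X : T, ∃ δ : R.jLo.obj ((SF.F ⋙ R.jUp ⋙ R.jSt ⋙ F' ⋙ R.jUp).obj X) ⟶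
          ((R.iSt ⋙ SF.F ⋙ R.iSh ⋙ R.iSt ⋙ F').obj (R.iUp.obj X))⟦(1 : ℤ)⟧,
        Triangle.mk (adjB.counit.app X) (adjA.unit.app X) δ ∈ distTriang T) := by
  refine ⟨ReflectedRecollement.adjA R SF F' ε, ReflectedRecollement.adjB R SF F' ε,
    ReflectedRecollement.isZero_iUp_jLo R, ⟨R.fullyFaithful_jLo⟩, ?_, ⟨R.fullyFaithful_iSt⟩,
    R.triangle_b, fun X => ReflectedRecollement.exists_triangle R _ _ X⟩
  exact ⟨(Adjunction.Triple.mk (ReflectedRecollement.adjB R SF F' ε)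
    R.adj₁).fullyFaithfulEquiv.symm R.fullyFaithful_iSt⟩
end

section
/- Given a recollement (S, T, U) and a Serre functor F on T with quasi-inverse F', set i_? := F ∘ i_* ∘ i^* ∘ F' ∘ i_* : S → T and j^! := j^* ∘ F ∘ j_! ∘ j^* ∘ F' : T → U. Then the six functors j_* : U → T, j^*, j^! : T → U, i^! : T → S, i_*, i_? : S → T form a recollement (U, T, S); that is: (j^*, j_*), (j_*, j^!), (i^!, i_*), (i_*, i_?) are adjoint pairs, i^! ∘ j_* = 0, the functors j_*, i_*, i_? are fully faithful, and every object X of T sits in distinguished triangles j_* j^! X → X → i_? i^! X → and i_* i^! X → X → j_* j^* X →, with the morphisms into and out of X being the relevant counit and unit morphisms. -/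
/-!
Setting: `k` a field; `S`, `T`, `U` skeletally small `k`-linear triangulated categories
with finite-dimensional Hom-spaces, `T` with split idempotents.  A recollement
`(S, T, U)` as in [BBD], and (right/left) Serre functors in the sense of
Reiten–Van den Bergh.
-/

open CategoryTheory CategoryTheory.Limits CategoryTheory.Pretriangulated

universe v₁ v₂ v₃ u₁ u₂ u₃ u₄

section SerreHelpers

variable {k : Type u₄} [Field k] {T : Type u₂} [Category.{v₂} T] [Preadditive T]
  [CategoryTheory.Linear k T]

/-- A linear equivalence `(a ⟶ b) ≃ (a' ⟶ b')` induces an equivalence on Serre duals. -/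
theorem serre_transfer [∀ X Y : T, FiniteDimensional k (X ⟶ Y)] {F : T ⥤ T}
    (s : RightSerreStructure k T F) {a b a' b' : T} (L : (a' ⟶ b') ≃ₗ[k] (a ⟶ b)) :
    ∃ E : (b ⟶ F.obj a) ≃ (b' ⟶ F.obj a'),
      ∀ (u : b ⟶ F.obj a) (φ : a' ⟶ b'), s.equiv a' b' φ (E u) = s.equiv a b (L φ) u := by
  let D : ∀ x y : T, (y ⟶ F.obj x) ≃ₗ[k] Module.Dual k (x ⟶ y) := fun x y =>
    (Module.evalEquiv k (y ⟶ F.obj x)).trans (s.equiv x y).dualMap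
  have hD : ∀ (x y : T) (u : y ⟶ F.obj x) (φ : x ⟶ y), D x y u φ = s.equiv x y φ u := by
    intro x y u φ
    rfl
  refine ⟨((D a b).trans (L.dualMap.trans (D a' b').symm)).toEquiv, ?_⟩
  intro u φ
  rw [← hD, ← hD]
  simp

theorem serre_ext [∀ X Y : T, FiniteDimensional k (X ⟶ Y)] {F : T ⥤ T}
    (s : RightSerreStructure k T F) {a b : T} {u v : b ⟶ F.obj a}
    (h : ∀ φ : a ⟶ b, s.equiv a b φ u = s.equiv a b φ v) : u = v := by
  apply (Module.evalEquiv k (b ⟶ F.obj a)).injective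
  ext ξ
  obtain ⟨φ, rfl⟩ := (s.equiv a b).surjective ξ
  exact h φ

/-- Adjunction from forward natural hom equivalences. -/
theorem exists_adj {C : Type*} {D : Type*} [Category* C] [Category* D] (L : C ⥤ D) (G : D ⥤ C)
    (e : ∀ X Y, (L.obj X ⟶ Y) ≃ (X ⟶ G.obj Y))
    (h1 : ∀ {X X' Y} (f : X' ⟶ X) (g : L.obj X ⟶ Y), e X' Y (L.map f ≫ g) = f ≫ e X Y g)
    (h2 : ∀ {X Y Y'} (f : L.obj X ⟶ Y) (g : Y ⟶ Y'), e X Y' (f ≫ g) = e X Y f ≫ G.map g) :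
    Nonempty (L ⊣ G) :=
  ⟨Adjunction.mkOfHomEquiv
    { homEquiv := e
      homEquiv_naturality_left_symm := by
        intro X' X Y f g
        rw [Equiv.symm_apply_eq, h1, Equiv.apply_symm_apply]
      homEquiv_naturality_right := by
        intros
        apply h2 }⟩

/-- `j_! ⊣ j^* ⊣ j_*` with `j_!, j_*` fully faithful: `j_*` has a right adjoint. -/
theorem exists_adjA [∀ X Y : T, FiniteDimensional k (X ⟶ Y)] {U : Type u₃} [Category.{v₃} U]
    {F : T ⥤ T} (s : RightSerreStructure k T F) (F' : T ⥤ T) (ε : F' ⋙ F ≅ 𝟭 T)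
    {jLo : U ⥤ T} {jUp : T ⥤ U} {jSt : U ⥤ T} (a3 : jLo ⊣ jUp) (a4 : jUp ⊣ jSt)
    [jLo.Full] [jLo.Faithful] [jSt.Full] [jSt.Faithful] :
    Nonempty (jSt ⊣ (F' ⋙ jUp ⋙ jLo ⋙ F ⋙ jUp)) := by
  let c : ∀ X, jLo.obj X ⟶ jSt.obj X := fun X =>
    jLo.map (inv (a4.counit.app X)) ≫ a3.counit.app (jSt.obj X)
  have hc : ∀ {X X'} (f : X ⟶ X'), jLo.map f ≫ c X' = c X ≫ jSt.map f := by
    intro X X' f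
    have h1 : f ≫ inv (a4.counit.app X') =
        inv (a4.counit.app X) ≫ jUp.map (jSt.map f) := by
      rw [IsIso.eq_inv_comp, ← Category.assoc, IsIso.comp_inv_eq]
      exact (a4.counit.naturality f).symm
    have h2 := a3.counit.naturality (jSt.map f)
    simp only [Functor.comp_map, Functor.id_map] at h2
    simp only [c, Category.assoc]
    rw [← h2, ← Category.assoc, ← Category.assoc, ← jLo.map_comp, ← jLo.map_comp, h1]
  have hci : ∀ X, IsIso (jUp.map (c X)) := by
    intro X
    simp only [c, Functor.map_comp]
    infer_instance
  have hα : ∀ A X, Function.Bijective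
      (Linear.rightComp k (jLo.obj A) (c X)) := by
    intro A X
    have : (fun φ => a3.homEquiv A (jSt.obj X) (Linear.rightComp k (jLo.obj A) (c X) φ)) =
        (fun φ => ((a3.homEquiv A _).trans ((asIso (jUp.map (c X))).homToEquiv (Z := A))) φ) := by
      funext φ
      simp [Adjunction.homEquiv_naturality_right]
    have h := ((a3.homEquiv A _).trans ((asIso (jUp.map (c X))).homToEquiv (Z := A))).bijective
    change Function.Bijective (fun φ => _) at h
    rw [← this] at h
    exact (Function.Bijective.of_comp_iff' (a3.homEquiv A (jSt.obj X)).bijective _).1 h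
  have hβ : ∀ Z X, Function.Bijective
      (Linear.leftComp k (jSt.obj X) (a3.counit.app Z)) := by
    intro Z X
    constructor
    · intro p q hpq
      apply (a4.homEquiv Z X).symm.injective
      have := congrArg (a4.homEquiv _ X).symm hpq
      simp only [Linear.leftComp_apply] at this
      erw [Adjunction.homEquiv_naturality_left_symm, Adjunction.homEquiv_naturality_left_symm] at this
      exact (cancel_epi (jUp.map (a3.counit.app Z))).1 this
    · intro q
      refine ⟨a4.homEquiv Z X (inv (jUp.map (a3.counit.app Z)) ≫ (a4.homEquiv _ X).symm q), ?_⟩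
      apply (a4.homEquiv _ X).symm.injective
      simp only [Linear.leftComp_apply]
      erw [Adjunction.homEquiv_naturality_left_symm]
      simp
  let L : ∀ Z X, (jLo.obj (jUp.obj Z) ⟶ jLo.obj X) ≃ₗ[k] (Z ⟶ jSt.obj X) := fun Z X =>
    (LinearEquiv.ofBijective _ (hα (jUp.obj Z) X)).trans
      (LinearEquiv.ofBijective _ (hβ Z X)).symm
  have hL : ∀ Z X φ, a3.counit.app Z ≫ L Z X φ = φ ≫ c X := by
    intro Z X φ
    exact (LinearEquiv.ofBijective _ (hβ Z X)).apply_symm_apply _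
  have hLu : ∀ Z X φ ψ, a3.counit.app Z ≫ ψ = φ ≫ c X → L Z X φ = ψ := by
    intro Z X φ ψ h
    apply (hβ Z X).1
    exact (hL Z X φ).trans h.symm
  choose E hE using fun Z X => serre_transfer s (L Z X)
  refine exists_adj _ _ (fun X Y =>
    ((ε.app Y).symm.homToEquiv (Z := jSt.obj X)).trans
      ((E (F'.obj Y) X).trans (a3.homEquiv X _))) ?_ ?_
  · intro X X' Y f g
    simp only [Equiv.trans_apply]
    erw [← Adjunction.homEquiv_naturality_left]
    congr 1
    apply serre_ext s
    intro φ
    rw [hE, ← s.naturality_right, hE]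
    have : L _ _ (φ ≫ jLo.map f) = L _ _ φ ≫ jSt.map f := by
      apply hLu
      rw [← Category.assoc, hL, Category.assoc, ← hc, Category.assoc]
    rw [this, s.naturality_right]
    simp
  · intro X Y Y' f g
    simp only [Equiv.trans_apply]
    erw [← Adjunction.homEquiv_naturality_right]
    congr 1
    apply serre_ext s
    intro φ
    have : L _ _ (jLo.map (jUp.map (F'.map g)) ≫ φ) = F'.map g ≫ L _ _ φ := by
      apply hLu
      have h2 := a3.counit.naturality (F'.map g)
      simp only [Functor.comp_map, Functor.id_map] at h2
      rw [← Category.assoc, ← h2, Category.assoc, hL, Category.assoc]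
    have h3 := s.naturality_left (jLo.map (jUp.map (F'.map g))) φ
      (E (F'.obj Y) X ((ε.app Y).symm.homToEquiv f))
    refine Eq.trans ?_ h3
    rw [hE, hE, this, s.naturality_left]
    have h4 := ε.inv.naturality g
    simp only [Functor.comp_map, Functor.id_map] at h4
    simp [h4]

/-- `i^* ⊣ i_* ⊣ i^!` with `i_*` fully faithful: `i^!` has a right adjoint. -/
theorem exists_adjB [∀ X Y : T, FiniteDimensional k (X ⟶ Y)] {S : Type u₁} [Category.{v₁} S]
    {F : T ⥤ T} (s : RightSerreStructure k T F) (F' : T ⥤ T) (ε : F' ⋙ F ≅ 𝟭 T)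
    {iSt : S ⥤ T} {iUp : T ⥤ S} {iSh : T ⥤ S} (a1 : iUp ⊣ iSt) (a2 : iSt ⊣ iSh)
    (ff : iSt.FullyFaithful) :
    Nonempty (iSh ⊣ (iSt ⋙ F' ⋙ iUp ⋙ iSt ⋙ F)) := by
  have hα : ∀ B Y, Function.Bijective
      (Linear.rightComp k (iSt.obj B) (a2.counit.app Y)) := by
    intro B Y
    have : (fun φ => Linear.rightComp k (iSt.obj B) (a2.counit.app Y) (ff.homEquiv φ)) =
        (fun φ => (a2.homEquiv B Y).symm φ) := by
      funext φ
      simp [Adjunction.homEquiv_counit, Functor.FullyFaithful.homEquiv]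
    have h := (a2.homEquiv B Y).symm.bijective
    change Function.Bijective (fun φ => _) at h
    rw [← this] at h
    exact (Function.Bijective.of_comp_iff _ (ff.homEquiv (X := B)
      (Y := iSh.obj Y)).bijective).1 h
  have hβ : ∀ Z A, Function.Bijective
      (Linear.leftComp k (iSt.obj A) (a1.unit.app Z)) := by
    intro Z A
    have : (fun φ => Linear.leftComp k (iSt.obj A) (a1.unit.app Z) (ff.homEquiv φ)) =
        (fun φ => (a1.homEquiv Z A) φ) := by
      funext φ
      simp [Adjunction.homEquiv_unit, Functor.FullyFaithful.homEquiv]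
    have h := (a1.homEquiv Z A).bijective
    change Function.Bijective (fun φ => _) at h
    rw [← this] at h
    exact (Function.Bijective.of_comp_iff _ (ff.homEquiv (X := iUp.obj Z)
      (Y := A)).bijective).1 h
  let L : ∀ Z Y, (iSt.obj (iUp.obj Z) ⟶ Y) ≃ₗ[k] (Z ⟶ iSt.obj (iSh.obj Y)) := fun Z Y =>
    (LinearEquiv.ofBijective _ (hα (iUp.obj Z) Y)).symm.trans
      (LinearEquiv.ofBijective _ (hβ Z (iSh.obj Y)))
  have hL : ∀ Z Y φ, L Z Y (φ ≫ a2.counit.app Y) = a1.unit.app Z ≫ φ := by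
    intro Z Y φ
    have h : φ ≫ a2.counit.app Y = (LinearEquiv.ofBijective _ (hα (iUp.obj Z) Y)) φ := rfl
    simp only [L, LinearEquiv.trans_apply]
    rw [h, LinearEquiv.symm_apply_apply]
    rfl
  have hs : ∀ Z Y (φ : iSt.obj (iUp.obj Z) ⟶ Y), ∃ φ', φ = φ' ≫ a2.counit.app Y := by
    intro Z Y φ
    obtain ⟨φ', h⟩ := (hα (iUp.obj Z) Y).2 φ
    exact ⟨φ', h.symm⟩
  choose E hE using fun Z Y => serre_transfer s (L Z Y)
  refine exists_adj _ _ (fun Y A =>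
    (ff.homEquiv).trans (((ε.app (iSt.obj A)).symm.homToEquiv (Z := iSt.obj (iSh.obj Y))).trans
      (E (F'.obj (iSt.obj A)) Y))) ?_ ?_
  · intro Y Y' A f g
    simp only [Equiv.trans_apply]
    apply serre_ext s
    intro φ
    obtain ⟨φ, rfl⟩ := hs _ _ φ
    refine Eq.trans ?_ (s.naturality_right _ _ _)
    have h2 := a2.counit.naturality f
    simp only [Functor.comp_map, Functor.id_map] at h2
    rw [hE, hE, Category.assoc, ← h2, ← Category.assoc, hL, hL, ← Category.assoc,
      s.naturality_right (_ ≫ _) (iSt.map (iSh.map f))]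
    simp [Functor.FullyFaithful.homEquiv]
  · intro Y A A' f g
    simp only [Equiv.trans_apply]
    apply serre_ext s
    intro φ
    obtain ⟨φ, rfl⟩ := hs _ _ φ
    refine Eq.trans ?_ (s.naturality_left (iSt.map (iUp.map (F'.map (iSt.map g)))) _ _)
    have h2 := a1.unit.naturality (F'.map (iSt.map g))
    simp only [Functor.comp_map, Functor.id_map] at h2
    rw [hE, hE, ← Category.assoc, hL, hL, ← Category.assoc, ← h2, Category.assoc,
      s.naturality_left (F'.map (iSt.map g)) (_ ≫ _)]
    have h4 := ε.inv.naturality (iSt.map g)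
    simp only [Functor.comp_map, Functor.id_map] at h4
    simp [Functor.FullyFaithful.homEquiv, h4]

/-- Replacing the first object of a distinguished triangle by an isomorphic one. -/
theorem triangle_replace [HasZeroObject T] [HasShift T ℤ]
    [∀ n : ℤ, (shiftFunctor T n).Additive] [Pretriangulated T] {K X Q C : T}
    {κ : K ⟶ X} {b : X ⟶ Q} {d : Q ⟶ K⟦(1 : ℤ)⟧} (h : Triangle.mk κ b d ∈ distTriang T)
    (c : C ⟶ X) (f : C ⟶ K) (u : K ⟶ C) (hfu : f ≫ u = 𝟙 C) (huf : u ≫ f = 𝟙 K)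
    (hc : c = f ≫ κ) : Triangle.mk c b (d ≫ u⟦(1 : ℤ)⟧') ∈ distTriang T := by
  refine isomorphic_distinguished _ h _ (Triangle.isoMk (Triangle.mk c b (d ≫ u⟦(1 : ℤ)⟧'))
    (Triangle.mk κ b d) (⟨f, u, hfu, huf⟩ : C ≅ K) (Iso.refl X) (Iso.refl Q) ?_ ?_ ?_)
  · exact (Category.comp_id c).trans hc
  · exact (Category.comp_id b).trans (Category.id_comp b).symm
  · change (d ≫ u⟦(1 : ℤ)⟧') ≫ f⟦(1 : ℤ)⟧' = 𝟙 Q ≫ d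
    rw [Category.assoc, ← Functor.map_comp, huf, CategoryTheory.Functor.map_id, Category.comp_id,
      Category.id_comp]

end SerreHelpers

/-- Given a recollement `(S, T, U)` and a Serre functor `F` on `T` with quasi-inverse `F'`,
set `i_? := F ∘ i_* ∘ i^* ∘ F' ∘ i_* : S ⥤ T` and `j^! := j^* ∘ F ∘ j_! ∘ j^* ∘ F' : T ⥤ U`.
Then the six functors `j_* : U ⥤ T`, `j^*, j^! : T ⥤ U`, `i^! : T ⥤ S`, `i_*, i_? : S ⥤ T`
form a recollement `(U, T, S)`:  `(j^*, j_*)`, `(j_*, j^!)`, `(i_*, i^!)`, `(i^!, i_?)` are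
adjoint pairs, `i^! ∘ j_* = 0`, the functors `j_*`, `i_*`, `i_?` are fully faithful, and
every `X : T` sits in distinguished triangles `j_* j^! X ⟶ X ⟶ i_? i^! X ⟶` and
`i_* i^! X ⟶ X ⟶ j_* j^* X ⟶` whose morphisms into and out of `X` are the relevant
counit and unit morphisms. -/
theorem reflected_recollement_lower
    {k : Type u₄} [Field k]
    {S : Type u₁} {T : Type u₂} {U : Type u₃}
    [Category.{v₁} S] [Category.{v₂} T] [Category.{v₃} U]
    [HasZeroObject S] [HasZeroObject T] [HasZeroObject U]
    [Preadditive S] [Preadditive T] [Preadditive U]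
    [CategoryTheory.Linear k S] [CategoryTheory.Linear k T] [CategoryTheory.Linear k U]
    [HasShift S ℤ] [HasShift T ℤ] [HasShift U ℤ]
    [∀ n : ℤ, (shiftFunctor S n).Additive] [∀ n : ℤ, (shiftFunctor T n).Additive]
    [∀ n : ℤ, (shiftFunctor U n).Additive]
    [Pretriangulated S] [Pretriangulated T] [Pretriangulated U]
    [EssentiallySmall.{v₁} S] [EssentiallySmall.{v₂} T] [EssentiallySmall.{v₃} U]
    [∀ X Y : S, FiniteDimensional k (X ⟶ Y)]
    [∀ X Y : T, FiniteDimensional k (X ⟶ Y)]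
    [∀ X Y : U, FiniteDimensional k (X ⟶ Y)]
    [IsIdempotentComplete T]
    (R : Recollement S T U)
    (SF : SerreFunctor k T) (F' : T ⥤ T)
    (η : SF.F ⋙ F' ≅ 𝟭 T) (ε : F' ⋙ SF.F ≅ 𝟭 T) :
    ∃ (adjA : R.jSt ⊣ (F' ⋙ R.jUp ⋙ R.jLo ⋙ SF.F ⋙ R.jUp))
      (adjB : R.iSh ⊣ (R.iSt ⋙ F' ⋙ R.iUp ⋙ R.iSt ⋙ SF.F)),
      (∀ X : U, IsZero (R.iSh.obj (R.jSt.obj X))) ∧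
      Nonempty R.jSt.FullyFaithful ∧
      Nonempty R.iSt.FullyFaithful ∧
      Nonempty (R.iSt ⋙ F' ⋙ R.iUp ⋙ R.iSt ⋙ SF.F).FullyFaithful ∧
      (∀ X : T, ∃ δ : (R.iSt ⋙ F' ⋙ R.iUp ⋙ R.iSt ⋙ SF.F).obj (R.iSh.obj X) ⟶
          (R.jSt.obj ((F' ⋙ R.jUp ⋙ R.jLo ⋙ SF.F ⋙ R.jUp).obj X))⟦(1 : ℤ)⟧,
        Triangle.mk (adjA.counit.app X) (adjB.unit.app X) δ ∈ distTriang T) ∧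
      (∀ X : T, ∃ δ : R.jSt.obj (R.jUp.obj X) ⟶ (R.iSt.obj (R.iSh.obj X))⟦(1 : ℤ)⟧,
        Triangle.mk (R.adj₂.counit.app X) (R.adj₄.unit.app X) δ ∈ distTriang T) := by
  have := R.fullyFaithful_jLo.full
  have := R.fullyFaithful_jLo.faithful
  have := R.fullyFaithful_jSt.full
  have := R.fullyFaithful_jSt.faithful
  let := R.commShift_iSh
  have := R.isTriangulated_iSh
  obtain ⟨adjA⟩ := exists_adjA SF.rightSerre F' ε R.adj₃ R.adj₄
  obtain ⟨adjB⟩ := exists_adjB SF.rightSerre F' ε R.adj₁ R.adj₂ R.fullyFaithful_iSt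
  have hz : ∀ X : U, IsZero (R.iSh.obj (R.jSt.obj X)) := by
    intro X
    rw [IsZero.iff_id_eq_zero]
    apply (R.adj₂.homEquiv _ _).symm.injective
    apply (R.adj₄.homEquiv _ _).symm.injective
    exact (R.zero_comp _).eq_of_src _ _
  have hff : (R.iSt ⋙ F' ⋙ R.iUp ⋙ R.iSt ⋙ SF.F).FullyFaithful :=
    (Adjunction.Triple.fullyFaithfulEquiv ⟨R.adj₂, adjB⟩) R.fullyFaithful_iSt
  refine ⟨adjA, adjB, hz, ⟨R.fullyFaithful_jSt⟩, ⟨R.fullyFaithful_iSt⟩, ⟨hff⟩, ?_, R.triangle_a⟩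
  intro X
  generalize F' ⋙ R.jUp ⋙ R.jLo ⋙ SF.F ⋙ R.jUp = jS at adjA ⊢
  generalize R.iSt ⋙ F' ⋙ R.iUp ⋙ R.iSt ⋙ SF.F = iQ at adjB hff ⊢
  have := hff.full
  have := hff.faithful
  obtain ⟨K, κ, bd, hK⟩ : ∃ (K : T) (κ : K ⟶ X) (bd : iQ.obj (R.iSh.obj X) ⟶ K⟦(1 : ℤ)⟧),
      Triangle.mk κ (adjB.unit.app X) bd ∈ distTriang T :=
    distinguished_cocone_triangle₁ (adjB.unit.app X)
  -- maps from `j_* A` and its shift to `i_? B` vanish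
  have hv : ∀ (A : U) (B : S) (f : R.jSt.obj A ⟶ iQ.obj B), f = 0 := by
    intro A B f
    apply (adjB.homEquiv _ _).symm.injective
    exact (hz A).eq_of_src _ _
  have hv' : ∀ (A : U) (B : S) (f : (R.jSt.obj A)⟦(1 : ℤ)⟧ ⟶ iQ.obj B), f = 0 := by
    intro A B f
    apply (adjB.homEquiv _ _).symm.injective
    refine IsZero.eq_of_src ?_ _ _
    exact IsZero.of_iso ((shiftFunctor S (1 : ℤ)).map_isZero (hz A))
      ((R.iSh.commShiftIso (1 : ℤ)).app (R.jSt.obj A))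
  have hKz : IsZero (R.iSh.obj K) := by
    have h := R.iSh.map_distinguished _ hK
    refine Triangle.isZero₁_of_isIso₂ _ h ?_
    change IsIso (R.iSh.map (adjB.unit.app X))
    infer_instance
  have hiso : IsIso (R.adj₄.unit.app K) := by
    obtain ⟨δ, hδ⟩ := R.triangle_a K
    exact (Triangle.isZero₁_iff_isIso₂ _ hδ).1
      ((@Functor.map_isZero _ _ _ _ _ _ R.iSt
        (by let := R.commShift_iSt; have := R.isTriangulated_iSt; infer_instance) _ hKz))
  have hinj : ∀ (A : U) (f : R.jSt.obj A ⟶ K), f ≫ κ = 0 → f = 0 := by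
    intro A f hf
    have h1 : f⟦(1 : ℤ)⟧' ≫ κ⟦(1 : ℤ)⟧' = 0 := by
      rw [← Functor.map_comp, hf, Functor.map_zero]
    obtain ⟨g, hg⟩ := Triangle.coyoneda_exact₁ _ hK (f⟦(1 : ℤ)⟧') h1
    have hg0 : g = 0 := hv' _ _ g
    rw [hg0, Limits.zero_comp] at hg
    exact (shiftFunctor T (1 : ℤ)).map_injective (hg.trans (Functor.map_zero _ _ _).symm)
  obtain ⟨f, hf⟩ : ∃ f : R.jSt.obj (jS.obj X) ⟶ K, adjA.counit.app X = f ≫ κ :=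
    Triangle.coyoneda_exact₂ _ hK (adjA.counit.app X) (hv _ _ _)
  obtain ⟨ct, hct⟩ : ∃ ct : R.jSt.obj (jS.obj X) ⟶ X, ct = adjA.counit.app X := ⟨_, rfl⟩
  have hcu : ∀ (A : U) (p : A ⟶ jS.obj X),
      (adjA.homEquiv A X).symm p = R.jSt.map p ≫ ct := by
    intro A p
    rw [hct]
    exact adjA.homEquiv_counit _ _ _
  replace hf : ct = f ≫ κ := hct.trans hf
  have hAcounit : ∀ (A : U) (p q : R.jSt.obj A ⟶ R.jSt.obj (jS.obj X)),
      p ≫ ct = q ≫ ct → p = q := by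
    intro A p q h
    obtain ⟨p, rfl⟩ := R.jSt.map_surjective p
    obtain ⟨q, rfl⟩ := R.jSt.map_surjective q
    rw [← hcu, ← hcu] at h
    rw [(adjA.homEquiv _ _).symm.injective h]
  let e : K ≅ R.jSt.obj (R.jUp.obj K) := asIso (R.adj₄.unit.app K)
  let u : K ⟶ R.jSt.obj (jS.obj X) := e.hom ≫ R.jSt.map (adjA.homEquiv _ _ (e.inv ≫ κ))
  have hu : u ≫ ct = κ := by
    simp only [u, Category.assoc]
    rw [← hcu, Equiv.symm_apply_apply, Iso.hom_inv_id_assoc]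
  have huf : u ≫ f = 𝟙 K := by
    rw [← cancel_epi e.inv, ← sub_eq_zero]
    apply hinj
    rw [Preadditive.sub_comp, Category.assoc, Category.assoc, ← hf, hu, Category.comp_id, sub_self]
  have hfu : f ≫ u = 𝟙 _ := by
    apply hAcounit
    rw [Category.assoc, hu, ← hf, Category.id_comp]
  exact ⟨bd ≫ u⟦(1 : ℤ)⟧', triangle_replace hK _ f u hfu huf (hct.symm.trans hf)⟩
end
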